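/- arXiv:0911.1863 — 2 statements merged into one kernel-verified Lean document; each statement's English description precedes it below -/
import Mathlib

section
/- Let R be a nontrivial commutative ring, E a free R-module of finite rank, and E₁ a submodule of E admitting a complementary submodule E₂ (i.e., E₁ ∩ E₂ = 0 and E₁ + E₂ = E) with both E₁ and E₂ free of finite rank. Then the coannihilator of the dual annihilator of E₁ equals E₁, i.e., (E₁^⊥)^⊤ = E₁. -/
/-!
`U ↦ U^⊥` and `F ↦ F^⊤` form an antitone Galois connection, so `(U^⊥)^⊤ = U` as soon as `U` is a
coannihilator. The kernel of a linear map `f : M → N` is one when the functionals on `N` separate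
its points from `0`: it is then the common kernel of the functionals `φ ∘ f`. A complemented
submodule is the kernel of the projection onto its complement.
-/

section

open Module

variable {R M N : Type*} [CommSemiring R] [AddCommMonoid M] [Module R M]
  [AddCommMonoid N] [Module R N]

theorem dualCoannihilator_range_dualMap_eq_ker (f : M →ₗ[R] N) (hN : (Dual.eval R N).ker = ⊥) :
    f.dualMap.range.dualCoannihilator = f.ker :=
  calc
    f.dualMap.range.dualCoannihilator = (Dual.eval R N ∘ₗ f).ker :=
      f.dualMap.dualCoannihilator_range_eq_ker_flip
    _ = f.ker := LinearMap.ker_comp_of_ker_eq_bot f hN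

theorem dualAnnihilator_dualCoannihilator_ker (f : M →ₗ[R] N) (hN : (Dual.eval R N).ker = ⊥) :
    f.ker.dualAnnihilator.dualCoannihilator = f.ker := by
  rw [← dualCoannihilator_range_dualMap_eq_ker f hN,
    Submodule.dualCoannihilator_dualAnnihilator_dualCoannihilator]

end

theorem stmt_7_general {R E : Type*} [CommRing R] [AddCommGroup E] [Module R E]
    {E₁ E₂ : Submodule R E} (h : IsCompl E₁ E₂) (hE₂ : (Module.Dual.eval R E₂).ker = ⊥) :
    E₁.dualAnnihilator.dualCoannihilator = E₁ := by
  rw [← Submodule.ker_projectionOnto h.symm]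
  exact dualAnnihilator_dualCoannihilator_ker _ hE₂

/-- Let `R` be a nontrivial commutative ring, `E` a free `R`-module of finite
rank, and `E₁` a submodule of `E` admitting a complementary submodule `E₂`,
with both `E₁` and `E₂` free of finite rank.  Then the coannihilator of the
dual annihilator of `E₁` equals `E₁`: `(E₁^⊥)^⊤ = E₁`. -/
theorem stmt_7 {R : Type*} [CommRing R] [Nontrivial R]
    {E : Type*} [AddCommGroup E] [Module R E]
    [Module.Free R E] [Module.Finite R E]
    (E₁ E₂ : Submodule R E) (h : IsCompl E₁ E₂)
    [Module.Free R E₁] [Module.Finite R E₁]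
    [Module.Free R E₂] [Module.Finite R E₂] :
    E₁.dualAnnihilator.dualCoannihilator = E₁ := by
  exact stmt_7_general h (Module.eval_ker R E₂)
end

section
/- Let R be a nontrivial commutative ring, E a free R-module of finite rank, and E₁ a submodule of E admitting a complementary submodule E₂ (i.e., E₁ ∩ E₂ = 0 and E₁ + E₂ = E) with both E₁ and E₂ free of finite rank. Then the rank of E₁ equals the corank in Dual R E of the dual annihilator E₁^⊥ (i.e., rank E₁ = rank((Dual R E)/E₁^⊥)), and the corank of E₁ in E equals the rank of E₁^⊥ (i.e., rank(E/E₁) = rank(E₁^⊥)). -/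
section DualAnnihilator

open Module

variable {R M : Type*} [CommRing R] [AddCommGroup M] [Module R M]

theorem dualRestrict_surjective_of_isCompl {p q : Submodule R M} (h : IsCompl p q) :
    Function.Surjective p.dualRestrict := fun φ =>
  ⟨φ ∘ₗ p.projectionOnto q h, by ext x; simp⟩

theorem finrank_dual_quotient_dualAnnihilator [Nontrivial R] (p : Submodule R M)
    [Free R p] [Module.Finite R p] (hp : Function.Surjective p.dualRestrict) :
    finrank R (Dual R M ⧸ p.dualAnnihilator) = finrank R p :=
  calc
    finrank R (Dual R M ⧸ p.dualAnnihilator) = finrank R (Dual R p) :=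
      (p.dualRestrict.quotKerEquivOfSurjective hp).finrank_eq
    _ = finrank R p := finrank_linearMap_self R R p

theorem finrank_dualAnnihilator_eq_finrank_quotient [Nontrivial R] (p : Submodule R M)
    [Free R (M ⧸ p)] [Module.Finite R (M ⧸ p)] :
    finrank R p.dualAnnihilator = finrank R (M ⧸ p) :=
  calc
    finrank R p.dualAnnihilator = finrank R (Dual R (M ⧸ p)) :=
      p.dualQuotEquivDualAnnihilator.symm.finrank_eq
    _ = finrank R (M ⧸ p) := finrank_linearMap_self R R (M ⧸ p)

end DualAnnihilator

/-- Let `R` be a nontrivial commutative ring, `E` a free `R`-module of finite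
rank, and `E₁` a submodule of `E` admitting a complementary submodule `E₂`,
with both `E₁` and `E₂` free of finite rank.  Then
`rank E₁ = rank ((Dual R E) ⧸ E₁^⊥)` (the corank of `E₁^⊥` in `Dual R E`) and
`rank (E ⧸ E₁) = rank E₁^⊥` (the corank of `E₁` in `E` is the rank of
`E₁^⊥`). -/
theorem stmt_8 {R : Type*} [CommRing R] [Nontrivial R]
    {E : Type*} [AddCommGroup E] [Module R E]
    [Module.Free R E] [Module.Finite R E]
    (E₁ E₂ : Submodule R E) (h : IsCompl E₁ E₂)
    [Module.Free R E₁] [Module.Finite R E₁]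
    [Module.Free R E₂] [Module.Finite R E₂] :
    Module.finrank R E₁ =
      Module.finrank R (Module.Dual R E ⧸ E₁.dualAnnihilator) ∧
    Module.finrank R (E ⧸ E₁) = Module.finrank R E₁.dualAnnihilator := by
  have extend : Function.Surjective E₁.dualRestrict := dualRestrict_surjective_of_isCompl h
  have quotient_free : Module.Free R (E ⧸ E₁) :=
    Module.Free.of_equiv (E₁.quotientEquivOfIsCompl E₂ h).symm
  exact ⟨(finrank_dual_quotient_dualAnnihilator E₁ extend).symm,
    (finrank_dualAnnihilator_eq_finrank_quotient E₁).symm⟩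
end
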